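/- For every complex number q with |q| < 1, the power series ∑_{n=0}^∞ T(n) q^n, where T(n) is the number of partitions of n such that, with 2j the largest repeated part, every positive even integer less than 2j appears at least twice, no odd part less than 2j+2 appears, each odd part appears at most once, no part greater than 2j is repeated, and no two parts are consecutive integers, equals ∑_{n=0}^∞ q^(2n(n+1)) (q; q^2)_n (−q^(2n+2); q)_∞ / ((q^2; q^2)_n). -/

import Mathlib

/-- The finite q-Pochhammer symbol `(a; q)_n = ∏_{h=0}^{n-1} (1 - a q^h)`. -/
noncomputable def qPoch (a q : ℂ) (n : ℕ) : ℂ := ∏ h ∈ Finset.range n, (1 - a * q ^ h)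

/-- The infinite q-Pochhammer symbol `(a; q)_∞ = ∏_{h=0}^{∞} (1 - a q^h)`. -/
noncomputable def qPochInf (a q : ℂ) : ℂ := ∏' h : ℕ, (1 - a * q ^ h)

/-- The largest repeated part of a partition (`0` if no part is repeated). -/
def largestRepeatedPart {n : ℕ} (π : n.Partition) : ℕ :=
  (π.parts.toFinset.filter (fun j => 2 ≤ π.parts.count j)).sup id

/-- `T n` is the number of partitions of `n` in which every odd part appears at most once, no
odd part less than (largest repeated part) + 2 appears, every positive even integer less than
the largest repeated part appears at least twice (so no part greater than the largest repeated
part is repeated), and no two parts are consecutive integers. -/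
noncomputable def T (n : ℕ) : ℕ :=
  Nat.card {π : n.Partition //
    (∀ j, Odd j → π.parts.count j ≤ 1) ∧
    (∀ j, Odd j → j < largestRepeatedPart π + 2 → π.parts.count j = 0) ∧
    (∀ j, Even j → 0 < j → j < largestRepeatedPart π → 2 ≤ π.parts.count j) ∧
    (∀ j, ¬(j ∈ π.parts ∧ j + 1 ∈ π.parts))}

/-! Both sides equal `∑ⱼ Wⱼ G(2j + 2)`. Here `Wⱼ = q ^ (2j(j + 1)) / (q²; q²)_j` accounts for
the repeated parts `2, 4, …, 2j` of a partition counted by `T`, and `G(m)` is the generating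
function of the finite sets of integers at least `m` without two consecutive elements, which
accounts for the remaining parts.

On the analytic side,
`(-q ^ m; q)_∞ = ∑ᵢ q ^ (i(2m + 2i - 1)) / (q²; q²)_i * G(m + 2i)`,
because both expressions tend to `1` as `m → ∞` and satisfy `F(m) = (1 + q ^ m) F(m + 1)`; for the
series this follows from `G(m) = G(m + 1) + q ^ m G(m + 2)` by telescoping. Substituting the
expansion into Slater's series and collecting the terms with `n + i = j` leaves the finite identity
`∑_{n + i = j} (q; q²)_n qⁱ / ((q²; q²)_n (q²; q²)_i) = 1 / (q²; q²)_j`.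
-/

open Filter Topology Finset

theorem eq_tprod_mul_of_eq_mul_succ {R : Type*} [CommMonoid R] [TopologicalSpace R]
    [ContinuousMul R] [T2Space R] {u f : ℕ → R} {L : R} (hf : ∀ m, f m = u m * f (m + 1))
    (hL : Tendsto f atTop (𝓝 L)) (m : ℕ) (hu : Multipliable fun h ↦ u (h + m)) :
    f m = (∏' h, u (h + m)) * L := by
  have partial_prod (k : ℕ) : f m = (∏ h ∈ range k, u (h + m)) * f (k + m) := by
    induction k with
    | zero => simp
    | succ k ih => rw [ih, prod_range_succ, hf (k + m), mul_assoc, add_right_comm]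
  exact tendsto_nhds_unique (tendsto_const_nhds.congr partial_prod)
    (hu.tendsto_prod_tprod_nat.mul (hL.comp (tendsto_add_atTop_nat m)))

theorem summable_norm_prod_range_of_tendsto_zero {R : Type*} [NormedCommRing R] {r : ℕ → R}
    (hr : Tendsto r atTop (𝓝 0)) : Summable fun n ↦ ‖∏ k ∈ range n, r k‖ := by
  refine summable_of_ratio_norm_eventually_le (r := 1 / 2) (by norm_num) ?_
  have small := hr.norm.eventually_le_const (u := 1 / 2) (by norm_num)
  filter_upwards [small] with n hn
  rw [norm_norm, norm_norm, prod_range_succ_comm]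
  exact (norm_mul_le _ _).trans (by gcongr)

section Pi

variable {R : Type*} [NormedCommRing R] {κ : Type*} {n : ℕ} {f : Fin n → κ → R}

theorem summable_norm_pi_prod (hf : ∀ i, Summable fun k ↦ ‖f i k‖) :
    Summable fun x : Fin n → κ ↦ ‖∏ i, f i (x i)‖ := by
  induction n with
  | zero => exact (hasSum_fintype _).summable
  | succ n ih =>
    rw [← (Fin.consEquiv fun _ ↦ κ).summable_iff]
    refine ((hf 0).mul_norm (ih fun i ↦ hf i.succ)).congr fun p ↦ ?_
    simp [Fin.consEquiv, Fin.prod_univ_succ]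

theorem hasSum_pi_prod [CompleteSpace R] {s : Fin n → R} (hf : ∀ i, Summable fun k ↦ ‖f i k‖)
    (hs : ∀ i, HasSum (f i) (s i)) :
    HasSum (fun x : Fin n → κ ↦ ∏ i, f i (x i)) (∏ i, s i) := by
  induction n with
  | zero => simp
  | succ n ih =>
    have tail_norm := summable_norm_pi_prod fun i : Fin n ↦ hf i.succ
    have tail := ih (fun i ↦ hf i.succ) fun i ↦ hs i.succ
    rw [← (Fin.consEquiv fun _ ↦ κ).hasSum_iff, Fin.prod_univ_succ]
    have product_summable := summable_mul_of_summable_norm (hf 0) tail_norm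
    simpa [Function.comp_def, Fin.consEquiv, Fin.prod_univ_succ] using
      HasSum.mul (hs 0) tail product_summable

end Pi

theorem tsum_tsum_eq_tsum_sum_antidiagonal {A E : Type*} [AddMonoid A] [HasAntidiagonal A]
    [NormedAddCommGroup E] [CompleteSpace E] {f : A × A → E} (hf : Summable f) :
    ∑' a, ∑' b, f (a, b) = ∑' n, ∑ p ∈ antidiagonal n, f p := by
  have sigma_summable := HasAntidiagonal.sigmaAntidiagonalEquivProd.summable_iff.mpr hf
  rw [← hf.tsum_prod, ← HasAntidiagonal.sigmaAntidiagonalEquivProd.tsum_eq f]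
  exact sigma_summable.tsum_sigma.trans <| tsum_congr fun n ↦
    (tsum_fintype _).trans (sum_coe_sort (antidiagonal n) f)

theorem hasSum_natCard_fiber_mul {X ι R : Type*} [NonAssocSemiring R] [TopologicalSpace R]
    [ContinuousAdd R] [RegularSpace R] {w : X → ι} [∀ n, Finite {x // w x = n}] {f : ι → R} {a : R}
    (h : HasSum (fun x ↦ f (w x)) a) :
    HasSum (fun n ↦ (Nat.card {x // w x = n} : R) * f n) a := by
  refine ((Equiv.sigmaFiberEquiv w).hasSum_iff.mpr h).sigma fun n ↦ ?_
  have := Fintype.ofFinite {x // w x = n}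
  have fiber_sum : HasSum (fun _ : {x // w x = n} ↦ f n) (Nat.card {x // w x = n} * f n) := by
    simpa [Nat.card_eq_fintype_card] using hasSum_fintype fun _ : {x // w x = n} ↦ f n
  exact fiber_sum.congr_fun fun x ↦ by simp [x.2]

theorem norm_pow_lt_one {𝕜 : Type*} [NormedDivisionRing 𝕜] {q : 𝕜} (hq : ‖q‖ < 1) {n : ℕ}
    (hn : n ≠ 0) : ‖q ^ n‖ < 1 := by
  rw [norm_pow]
  exact pow_lt_one₀ (norm_nonneg q) hq hn

theorem one_sub_pow_ne_zero {𝕜 : Type*} [NormedDivisionRing 𝕜] {q : 𝕜} (hq : ‖q‖ < 1) {n : ℕ}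
    (hn : n ≠ 0) : 1 - q ^ n ≠ 0 :=
  sub_ne_zero.mpr fun h ↦ by simpa [← h] using norm_pow_lt_one hq hn

theorem qPoch_succ (a q : ℂ) (n : ℕ) : qPoch a q (n + 1) = qPoch a q n * (1 - a * q ^ n) :=
  prod_range_succ _ n

theorem qPoch_self_succ (q : ℂ) (n : ℕ) :
    qPoch q q (n + 1) = qPoch q q n * (1 - q ^ (n + 1)) := by
  rw [qPoch_succ, pow_succ']

theorem qPoch_self_ne_zero {q : ℂ} (hq : ‖q‖ < 1) (n : ℕ) : qPoch q q n ≠ 0 :=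
  prod_ne_zero_iff.mpr fun k _ ↦ by
    rw [← pow_succ']
    exact one_sub_pow_ne_zero hq k.succ_ne_zero

theorem sum_antidiagonal_qPoch_div_mul_pow_div (a : ℂ) {q : ℂ} (hq : ‖q‖ < 1) (n : ℕ) :
    ∑ p ∈ antidiagonal n, qPoch a q p.1 / qPoch q q p.1 * (a ^ p.2 / qPoch q q p.2) =
      1 / qPoch q q n := by
  induction n with
  | zero => simp [qPoch]
  | succ n ih =>
    set t : ℕ × ℕ → ℂ := fun p ↦ qPoch a q p.1 / qPoch q q p.1 * (a ^ p.2 / qPoch q q p.2)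
    have ne_zero (k : ℕ) : 1 - q ^ (k + 1) ≠ 0 := one_sub_pow_ne_zero hq k.succ_ne_zero
    have raise_fst (k l : ℕ) : (1 - q ^ (k + 1)) * t (k + 1, l) = (1 - a * q ^ k) * t (k, l) := by
      simp only [t, qPoch_succ a, qPoch_self_succ]
      field_simp [ne_zero k, qPoch_self_ne_zero hq k]
    have raise_snd (k l : ℕ) : (1 - q ^ (l + 1)) * t (k, l + 1) = a * t (k, l) := by
      simp only [t, qPoch_self_succ, pow_succ' a]
      field_simp [ne_zero l, qPoch_self_ne_zero hq l]
    have recurrence : (1 - q ^ (n + 1)) * ∑ p ∈ antidiagonal (n + 1), t p =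
        ∑ p ∈ antidiagonal n, t p := by
      calc
        _ = ∑ p ∈ antidiagonal (n + 1), (1 - q ^ p.1) * t p +
            ∑ p ∈ antidiagonal (n + 1), q ^ p.1 * ((1 - q ^ p.2) * t p) := by
          -- `1 - q ^ (n + 1) = (1 - q ^ p.1) + q ^ p.1 * (1 - q ^ p.2)` on the antidiagonal
          rw [mul_sum, ← sum_add_distrib]
          refine sum_congr rfl fun p hp ↦ ?_
          rw [← mem_antidiagonal.mp hp]
          ring
        _ = ∑ p ∈ antidiagonal n, (1 - a * q ^ p.1) * t p +
            ∑ p ∈ antidiagonal n, q ^ p.1 * (a * t p) := by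
          rw [Nat.sum_antidiagonal_succ, Nat.sum_antidiagonal_succ' (f := fun p ↦ q ^ p.1 * _)]
          simp [raise_fst, raise_snd]
        _ = ∑ p ∈ antidiagonal n, t p := by
          rw [← sum_add_distrib]
          exact sum_congr rfl fun p _ ↦ by ring
    rw [eq_div_iff (qPoch_self_ne_zero hq _), qPoch_self_succ, mul_comm, mul_assoc, recurrence, ih,
      mul_one_div_cancel (qPoch_self_ne_zero hq n)]

/-- The finite sets of integers at least `m` that contain no two consecutive integers. They are
the possible sets of nonrepeated parts of the partitions counted by `T`. -/
def sparseFinsets (m : ℕ) : Set (Finset ℕ) :=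
  {s | (∀ k ∈ s, m ≤ k) ∧ ∀ k ∈ s, k + 1 ∉ s}

theorem notMem_of_mem_sparseFinsets {m n : ℕ} {s : Finset ℕ} (hs : s ∈ sparseFinsets n)
    (hmn : m < n) : m ∉ s :=
  fun hm ↦ hmn.not_ge (hs.1 m hm)

theorem empty_mem_sparseFinsets (m : ℕ) : ∅ ∈ sparseFinsets m := by
  simp [sparseFinsets]

theorem sparseFinsets_eq_union (m : ℕ) :
    sparseFinsets m = sparseFinsets (m + 1) ∪ insert m '' sparseFinsets (m + 2) := by
  ext s
  constructor
  · rintro ⟨le, sparse⟩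
    by_cases hm : m ∈ s
    · refine .inr ⟨s.erase m, ⟨fun k hk ↦ ?_, ?_⟩, insert_erase hm⟩
      · have := sparse m hm
        grind
      · grind
    · exact .inl ⟨by grind, sparse⟩
  · rintro (⟨le, sparse⟩ | ⟨t, ⟨le, sparse⟩, rfl⟩)
    · exact ⟨fun k hk ↦ (le k hk).trans' m.le_succ, sparse⟩
    · constructor <;> grind

theorem disjoint_sparseFinsets_insert_image (m : ℕ) :
    Disjoint (sparseFinsets (m + 1)) (insert m '' sparseFinsets (m + 2)) := by
  rw [Set.disjoint_right]
  rintro _ ⟨t, -, rfl⟩ h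
  exact notMem_of_mem_sparseFinsets h m.lt_succ_self (mem_insert_self m t)

theorem injOn_insert_sparseFinsets (m : ℕ) : Set.InjOn (insert m) (sparseFinsets (m + 2)) := by
  intro s hs t ht h
  rw [← erase_insert (notMem_of_mem_sparseFinsets hs (Nat.lt_add_of_pos_right two_pos)), h,
    erase_insert (notMem_of_mem_sparseFinsets ht (Nat.lt_add_of_pos_right two_pos))]

section NormedField

variable {𝕜 : Type*} [NormedField 𝕜] {q : 𝕜}

/-- The generating function of `sparseFinsets m` by sum of elements. -/
noncomputable def sparseGF (q : 𝕜) (m : ℕ) : 𝕜 := ∑' s : sparseFinsets m, ∏ k ∈ s.1, q ^ k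

/-- The weight `q ^ (2i(i - 1) + ci) / (q²; q²)_i`, as a product so that it makes sense over any
field and needs no subtraction in exponents. For `c = 4` it is the generating function of the
partitions with set of parts `{2, 4, …, 2i}`, each part being repeated. -/
noncomputable def evenWeight (q : 𝕜) (c i : ℕ) : 𝕜 :=
  ∏ k ∈ range i, q ^ (4 * k + c) / (1 - q ^ (2 * k + 2))

theorem evenWeight_succ_mul (hq : ‖q‖ < 1) (c i : ℕ) :
    evenWeight q c (i + 1) * (1 - q ^ (2 * i + 2)) = evenWeight q c i * q ^ (4 * i + c) := by
  rw [evenWeight, prod_range_succ, mul_assoc,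
    div_mul_cancel₀ _ (one_sub_pow_ne_zero hq (Nat.succ_ne_zero _)), evenWeight]

theorem evenWeight_add (q : 𝕜) (c d i : ℕ) :
    evenWeight q (c + d) i = q ^ (d * i) * evenWeight q c i := by
  induction i with
  | zero => simp [evenWeight]
  | succ i ih =>
    simp only [evenWeight, prod_range_succ] at ih ⊢
    rw [ih]
    ring

theorem tendsto_pow_mul_add (hq : ‖q‖ < 1) {a : ℕ} (ha : a ≠ 0) (b : ℕ) :
    Tendsto (fun k ↦ q ^ (a * k + b)) atTop (𝓝 0) :=
  (tendsto_pow_atTop_nhds_zero_of_norm_lt_one hq).comp <|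
    tendsto_atTop_mono (fun k ↦ (Nat.le_mul_of_pos_left k ha.bot_lt).trans (Nat.le_add_right _ b))
      tendsto_id

theorem tendsto_pow_div_one_sub_pow (hq : ‖q‖ < 1) (c : ℕ) :
    Tendsto (fun k ↦ q ^ (4 * k + c) / (1 - q ^ (2 * k + 2))) atTop (𝓝 0) := by
  simpa [Pi.div_def] using (tendsto_pow_mul_add hq four_ne_zero c).div
    ((tendsto_pow_mul_add hq two_ne_zero 2).const_sub 1) (by simp)

theorem summable_norm_evenWeight (hq : ‖q‖ < 1) (c : ℕ) :
    Summable fun i ↦ ‖evenWeight q c i‖ :=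
  summable_norm_prod_range_of_tendsto_zero (tendsto_pow_div_one_sub_pow hq c)

theorem summable_norm_pow_add (hq : ‖q‖ < 1) (m : ℕ) : Summable fun k ↦ ‖q ^ (k + m)‖ := by
  simpa only [norm_pow] using
    (summable_nat_add_iff m).mpr (summable_geometric_of_lt_one (norm_nonneg q) hq)

theorem norm_evenWeight_add_le (hq : ‖q‖ < 1) (c d i : ℕ) :
    ‖evenWeight q (c + d) i‖ ≤ ‖evenWeight q c i‖ := by
  rw [evenWeight_add, norm_mul, norm_pow]
  exact mul_le_of_le_one_left (norm_nonneg _) (pow_le_one₀ (norm_nonneg q) hq.le)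

theorem tendsto_evenWeight_add_mul (hq : ‖q‖ < 1) (c : ℕ) {d : ℕ} (hd : d ≠ 0) (i : ℕ) :
    Tendsto (fun m ↦ evenWeight q (d * m + c) i) atTop (𝓝 (if i = 0 then 1 else 0)) := by
  rcases eq_or_ne i 0 with rfl | hi
  · simp [evenWeight]
  · have pow_tendsto := tendsto_pow_mul_add hq (mul_ne_zero hd hi) 0
    simpa [hi, add_comm _ c, evenWeight_add, mul_right_comm] using
      pow_tendsto.mul_const (evenWeight q c i)

theorem summable_norm_prod_pow (hq : ‖q‖ < 1) : Summable fun s : Finset ℕ ↦ ‖∏ k ∈ s, q ^ k‖ := by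
  simpa only [norm_prod, add_zero] using summable_finsetProd_of_summable_nonneg
    (fun _ ↦ norm_nonneg _) (summable_norm_pow_add hq 0)

theorem summable_norm_prod_pow_sparseFinsets (hq : ‖q‖ < 1) (m : ℕ) :
    Summable fun s : sparseFinsets m ↦ ‖∏ k ∈ s.1, q ^ k‖ :=
  (summable_norm_prod_pow hq).subtype _

variable [CompleteSpace 𝕜]

theorem sparseGF_eq_add (hq : ‖q‖ < 1) (m : ℕ) :
    sparseGF q m = sparseGF q (m + 1) + q ^ m * sparseGF q (m + 2) := by
  have summable_on (S : Set (Finset ℕ)) : Summable ((fun s ↦ ∏ k ∈ s, q ^ k) ∘ (↑) : S → 𝕜) :=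
    (summable_norm_prod_pow hq).of_norm.subtype S
  have insert_weight (s : sparseFinsets (m + 2)) :
      ∏ k ∈ insert m s.1, q ^ k = q ^ m * ∏ k ∈ s.1, q ^ k :=
    prod_insert (notMem_of_mem_sparseFinsets s.2 (by lia))
  calc sparseGF q m
    _ = ∑' s : ↑(sparseFinsets (m + 1) ∪ insert m '' sparseFinsets (m + 2)),
          ∏ k ∈ s.1, q ^ k := by
      rw [← sparseFinsets_eq_union, sparseGF]
    _ = sparseGF q (m + 1) + ∑' s : ↑(insert m '' sparseFinsets (m + 2)), ∏ k ∈ s.1, q ^ k :=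
      Summable.tsum_union_disjoint (disjoint_sparseFinsets_insert_image m)
        (summable_on _) (summable_on _)
    _ = sparseGF q (m + 1) + q ^ m * sparseGF q (m + 2) := by
      rw [tsum_image (fun s ↦ ∏ k ∈ s, q ^ k) (injOn_insert_sparseFinsets m),
        tsum_congr insert_weight, tsum_mul_left, sparseGF, sparseGF]

theorem tendsto_sparseGF (hq : ‖q‖ < 1) : Tendsto (sparseGF q) atTop (𝓝 1) := by
  have sparseGF_eq (m : ℕ) : sparseGF q m =
      ∑' s, (sparseFinsets m).indicator (fun s ↦ ∏ k ∈ s, q ^ k) s :=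
    tsum_subtype (sparseFinsets m) fun s ↦ ∏ k ∈ s, q ^ k
  have limit_eq : ∑' s : Finset ℕ, (if s = ∅ then (1 : 𝕜) else 0) = 1 := tsum_ite_eq ∅ _
  rw [funext sparseGF_eq, ← limit_eq]
  refine tendsto_tsum_of_dominated_convergence (summable_norm_prod_pow hq) (fun s ↦ ?_)
    (.of_forall fun m s ↦ norm_indicator_le_norm_self _ _)
  rcases s.eq_empty_or_nonempty with rfl | ⟨k, hk⟩
  · simp [empty_mem_sparseFinsets]
  · rw [if_neg (ne_empty_of_mem hk)]
    refine tendsto_const_nhds.congr' ?_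
    filter_upwards [eventually_gt_atTop k] with m hm
    exact (Set.indicator_of_notMem (fun h ↦ notMem_of_mem_sparseFinsets h hm hk) _).symm

theorem exists_norm_sparseGF_le (hq : ‖q‖ < 1) : ∃ B, ∀ m, ‖sparseGF q m‖ ≤ B := by
  obtain ⟨B, hB⟩ := (tendsto_sparseGF hq).norm.bddAbove_range
  exact ⟨B, fun m ↦ hB ⟨m, rfl⟩⟩

theorem summable_evenWeight_mul_sparseGF (hq : ‖q‖ < 1) (c : ℕ) (φ : ℕ → ℕ) :
    Summable fun i ↦ evenWeight q c i * sparseGF q (φ i) := by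
  obtain ⟨B, hB⟩ := exists_norm_sparseGF_le hq
  refine .of_norm_bounded ((summable_norm_evenWeight hq c).mul_right B) fun i ↦ ?_
  rw [norm_mul]
  gcongr
  exact hB _

/-- A series in the generating functions of sparse sets, introduced because it sums to
`(-q ^ m; q)_∞`, the generating function of all finite sets of integers at least `m`. -/
noncomputable def distinctGF (q : 𝕜) (m : ℕ) : 𝕜 :=
  ∑' i, evenWeight q (2 * m + 1) i * sparseGF q (m + 2 * i)

theorem distinctGF_eq_mul_succ (hq : ‖q‖ < 1) (m : ℕ) :
    distinctGF q m = (1 + q ^ m) * distinctGF q (m + 1) := by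
  set b : ℕ → 𝕜 := fun i ↦
    evenWeight q (2 * m + 1) i * (1 - q ^ (2 * i)) * sparseGF q (m + 2 * i + 1) with hb
  have weight_eq (i : ℕ) :
      evenWeight q (2 * (m + 1) + 1) i = q ^ (2 * i) * evenWeight q (2 * m + 1) i :=
    evenWeight_add q (2 * m + 1) 2 i
  have b_succ (i : ℕ) : b (i + 1) =
      evenWeight q (2 * m + 1) i * q ^ (4 * i + (2 * m + 1)) * sparseGF q (m + 2 * i + 3) := by
    rw [← evenWeight_succ_mul hq]
    rfl
  have b_summable : Summable b := by
    refine ((summable_evenWeight_mul_sparseGF hq (2 * m + 1) (m + 2 * · + 1)).sub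
      (summable_evenWeight_mul_sparseGF hq (2 * (m + 1) + 1) (m + 2 * · + 1))).congr fun i ↦ ?_
    rw [weight_eq, hb]
    ring
  have telescope : ∑' i, (b i - b (i + 1)) = 0 := by
    rw [b_summable.tsum_sub ((summable_nat_add_iff 1).mpr b_summable),
      b_summable.tsum_eq_zero_add]
    simp [hb]
  have termwise (i : ℕ) : evenWeight q (2 * m + 1) i * sparseGF q (m + 2 * i) =
      (1 + q ^ m) * (evenWeight q (2 * (m + 1) + 1) i * sparseGF q (m + 1 + 2 * i)) +
        (b i - b (i + 1)) := by
    rw [b_succ, weight_eq, add_right_comm m 1]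
    simp only [hb]
    linear_combination evenWeight q (2 * m + 1) i * (sparseGF_eq_add hq (m + 2 * i) -
      q ^ (m + 2 * i) * sparseGF_eq_add hq (m + 2 * i + 1))
  rw [distinctGF, tsum_congr termwise, Summable.tsum_add
    ((summable_evenWeight_mul_sparseGF hq _ _).mul_left _)
    (b_summable.sub ((summable_nat_add_iff 1).mpr b_summable)), telescope, add_zero,
    tsum_mul_left, distinctGF]

theorem tendsto_distinctGF (hq : ‖q‖ < 1) : Tendsto (distinctGF q) atTop (𝓝 1) := by
  obtain ⟨B, hB⟩ := exists_norm_sparseGF_le hq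
  have limit_eq : ∑' i : ℕ, (if i = 0 then (1 : 𝕜) else 0) * 1 = 1 := by simp
  rw [← limit_eq]
  refine tendsto_tsum_of_dominated_convergence ((summable_norm_evenWeight hq 1).mul_right B)
    (fun i ↦ ?_) (.of_forall fun m i ↦ ?_)
  · exact (tendsto_evenWeight_add_mul hq 1 two_ne_zero i).mul
      ((tendsto_sparseGF hq).comp (tendsto_add_atTop_nat (2 * i)))
  · rw [norm_mul, add_comm _ 1]
    gcongr
    · exact norm_evenWeight_add_le hq ..
    · exact hB _

end NormedField

theorem qPochInf_neg_pow_eq_distinctGF {q : ℂ} (hq : ‖q‖ < 1) (m : ℕ) :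
    qPochInf (-(q ^ m)) q = distinctGF q m := by
  rw [eq_tprod_mul_of_eq_mul_succ (distinctGF_eq_mul_succ hq) (tendsto_distinctGF hq) m
    (multipliable_one_add_of_summable (summable_norm_pow_add hq m)), mul_one, qPochInf]
  exact tprod_congr fun h ↦ by ring

theorem evenWeight_add_two (q : ℂ) (c i : ℕ) :
    evenWeight q (c + 2) i = q ^ (i * (2 * i + c)) / qPoch (q ^ 2) (q ^ 2) i := by
  induction i with
  | zero => simp [evenWeight, qPoch]
  | succ i ih =>
    rw [evenWeight, prod_range_succ, ← evenWeight, ih, qPoch_self_succ, div_mul_div_comm]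
    ring

theorem sum_antidiagonal_evenWeight {q : ℂ} (hq : ‖q‖ < 1) (j : ℕ) :
    ∑ p ∈ antidiagonal j, evenWeight q 4 p.1 * qPoch q (q ^ 2) p.1 *
      evenWeight q (2 * (2 * p.1 + 2) + 1) p.2 = evenWeight q 4 j := by
  rw [evenWeight_add_two q 2 j, div_eq_mul_one_div,
    ← sum_antidiagonal_qPoch_div_mul_pow_div q (norm_pow_lt_one hq two_ne_zero) j, mul_sum]
  refine sum_congr rfl fun p hp ↦ ?_
  rw [← mem_antidiagonal.mp hp, show 2 * (2 * p.1 + 2) + 1 = 4 * p.1 + 3 + 2 by ring,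
    evenWeight_add_two q 2, evenWeight_add_two q (4 * p.1 + 3)]
  ring

theorem summable_norm_evenWeight_mul_qPoch {q : ℂ} (hq : ‖q‖ < 1) :
    Summable fun n ↦ ‖evenWeight q 4 n * qPoch q (q ^ 2) n‖ := by
  have ratio_tendsto : Tendsto (fun k ↦ q ^ (4 * k + 4) / (1 - q ^ (2 * k + 2)) *
      (1 - q * (q ^ 2) ^ k)) atTop (𝓝 0) := by
    simpa [← pow_mul, ← pow_succ'] using (tendsto_pow_div_one_sub_pow hq 4).mul
      ((tendsto_pow_mul_add hq two_ne_zero 1).const_sub 1)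
  simpa only [evenWeight, qPoch, prod_mul_distrib] using
    summable_norm_prod_range_of_tendsto_zero ratio_tendsto

theorem tsum_evenWeight_mul_sparseGF {q : ℂ} (hq : ‖q‖ < 1) :
    ∑' j, evenWeight q 4 j * sparseGF q (2 * j + 2) =
      ∑' n, evenWeight q 4 n * qPoch q (q ^ 2) n * distinctGF q (2 * n + 2) := by
  set F : ℕ × ℕ → ℂ := fun p ↦ evenWeight q 4 p.1 * qPoch q (q ^ 2) p.1 *
    (evenWeight q (2 * (2 * p.1 + 2) + 1) p.2 * sparseGF q (2 * p.1 + 2 + 2 * p.2)) with hF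
  have F_summable : Summable F := by
    obtain ⟨B, hB⟩ := exists_norm_sparseGF_le hq
    refine .of_norm_bounded ((summable_norm_evenWeight_mul_qPoch hq).mul_of_nonneg
      ((summable_norm_evenWeight hq 1).mul_right B) (fun _ ↦ norm_nonneg _)
      fun _ ↦ mul_nonneg (norm_nonneg _) ((norm_nonneg _).trans (hB 0))) fun p ↦ ?_
    rw [hF, norm_mul, norm_mul (evenWeight q _ p.2), add_comm _ 1]
    gcongr
    · exact norm_evenWeight_add_le hq ..
    · exact hB _
  have diagonal_sum (j : ℕ) :
      ∑ p ∈ antidiagonal j, F p = evenWeight q 4 j * sparseGF q (2 * j + 2) := by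
    rw [← sum_antidiagonal_evenWeight hq j, sum_mul]
    refine sum_congr rfl fun p hp ↦ ?_
    rw [← mem_antidiagonal.mp hp, show 2 * (p.1 + p.2) + 2 = 2 * p.1 + 2 + 2 * p.2 by ring,
      mul_assoc]
  simp only [distinctGF, ← tsum_mul_left]
  rw [tsum_tsum_eq_tsum_sum_antidiagonal F_summable, tsum_congr diagonal_sum]

/-- The partitions counted by `T`. -/
def IsAdmissible {n : ℕ} (π : n.Partition) : Prop :=
  (∀ j, Odd j → π.parts.count j ≤ 1) ∧
  (∀ j, Odd j → j < largestRepeatedPart π + 2 → π.parts.count j = 0) ∧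
  (∀ j, Even j → 0 < j → j < largestRepeatedPart π → 2 ≤ π.parts.count j) ∧
  ∀ j, ¬(j ∈ π.parts ∧ j + 1 ∈ π.parts)

section LargestRepeatedPart

variable {n : ℕ} {π : n.Partition}

theorem largestRepeatedPart_le_iff {k : ℕ} :
    largestRepeatedPart π ≤ k ↔ ∀ j, 2 ≤ π.parts.count j → j ≤ k := by
  simp only [largestRepeatedPart, Finset.sup_le_iff, mem_filter, Multiset.mem_toFinset, id]
  exact ⟨fun h j hj ↦ h j ⟨Multiset.count_pos.mp (two_pos.trans_le hj), hj⟩, fun h j hj ↦ h j hj.2⟩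

theorem le_largestRepeatedPart {k : ℕ} (hk : 2 ≤ π.parts.count k) : k ≤ largestRepeatedPart π :=
  largestRepeatedPart_le_iff.mp le_rfl k hk

theorem two_le_count_largestRepeatedPart (h : largestRepeatedPart π ≠ 0) :
    2 ≤ π.parts.count (largestRepeatedPart π) := by
  by_contra not_repeated
  have le_pred : largestRepeatedPart π ≤ largestRepeatedPart π - 1 :=
    largestRepeatedPart_le_iff.mpr fun j hj ↦
      Nat.le_sub_one_of_lt <| (le_largestRepeatedPart hj).lt_of_ne fun hjk ↦
        not_repeated (hjk ▸ hj)
  lia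

theorem IsAdmissible.even_largestRepeatedPart (hπ : IsAdmissible π) :
    Even (largestRepeatedPart π) := by
  by_contra not_even
  have odd := Nat.not_even_iff_odd.mp not_even
  have repeated := two_le_count_largestRepeatedPart odd.pos.ne'
  have absent := hπ.2.1 _ odd (by lia)
  lia

theorem IsAdmissible.two_le_count (hπ : IsAdmissible π) {i : ℕ}
    (hi : 2 * i + 2 ≤ largestRepeatedPart π) : 2 ≤ π.parts.count (2 * i + 2) := by
  rcases hi.lt_or_eq with lt | eq
  · exact hπ.2.2.1 _ (by grind) (by lia) lt
  · rw [eq]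
    exact two_le_count_largestRepeatedPart (by lia)

theorem IsAdmissible.filter_mem_sparseFinsets (hπ : IsAdmissible π) :
    π.parts.toFinset.filter (largestRepeatedPart π < ·) ∈
      sparseFinsets (largestRepeatedPart π + 2) := by
  have even := hπ.even_largestRepeatedPart
  refine ⟨fun k hk ↦ ?_, fun k hk hk' ↦ hπ.2.2.2 k ?_⟩
  · have mem := mem_filter.mp hk
    have odd_absent := hπ.2.1 k
    by_contra! lt
    exact (Multiset.count_pos.mpr (Multiset.mem_toFinset.mp mem.1)).ne'
      (odd_absent (by grind) lt)
  · grind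

end LargestRepeatedPart

/-- Codes `(j, f, s)` for admissible partitions with largest repeated part `2j`: the part `2(i + 1)`
has multiplicity `f i + 2` for `i < j`, and `s` is the set of parts exceeding `2j`. -/
abbrev PartitionCode := Σ j : ℕ, (Fin j → ℕ) × sparseFinsets (2 * j + 2)

namespace PartitionCode

/-- The multiset of parts encoded by a code. -/
def toMultiset (x : PartitionCode) : Multiset ℕ :=
  ∑ i, Multiset.replicate (x.2.1 i + 2) (2 * (i : ℕ) + 2) + x.2.2.1.val

theorem mem_toMultiset {x : PartitionCode} {k : ℕ} :
    k ∈ x.toMultiset ↔ (∃ i : Fin x.1, k = 2 * i + 2) ∨ k ∈ x.2.2.1 := by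
  simp only [toMultiset, Multiset.mem_add, Multiset.mem_sum, Multiset.mem_replicate]
  simp

theorem count_toMultiset (x : PartitionCode) (k : ℕ) :
    x.toMultiset.count k = (∑ i : Fin x.1, if 2 * (i : ℕ) + 2 = k then x.2.1 i + 2 else 0) +
      if k ∈ x.2.2.1 then 1 else 0 := by
  simp only [toMultiset, Multiset.count_add, Multiset.count_sum', Multiset.count_replicate,
    Multiset.count_eq_of_nodup x.2.2.1.nodup, mem_val]

theorem count_toMultiset_two_mul_add_two (x : PartitionCode) (i : Fin x.1) :
    x.toMultiset.count (2 * (i : ℕ) + 2) = x.2.1 i + 2 := by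
  have notMem : 2 * (i : ℕ) + 2 ∉ x.2.2.1 := notMem_of_mem_sparseFinsets x.2.2.2 (by lia)
  simp [count_toMultiset, notMem, Fin.val_inj]

theorem count_toMultiset_of_forall_ne {x : PartitionCode} {k : ℕ}
    (hk : ∀ i : Fin x.1, 2 * (i : ℕ) + 2 ≠ k) :
    x.toMultiset.count k = if k ∈ x.2.2.1 then 1 else 0 := by
  simp [count_toMultiset, hk]

theorem count_toMultiset_le_one {x : PartitionCode} {k : ℕ}
    (hk : ∀ i : Fin x.1, 2 * (i : ℕ) + 2 ≠ k) : x.toMultiset.count k ≤ 1 := by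
  rw [count_toMultiset_of_forall_ne hk]
  split_ifs <;> simp

section Partition

variable {n : ℕ} {π : n.Partition}

theorem largestRepeatedPart_eq {x : PartitionCode} (hx : x.toMultiset = π.parts) :
    largestRepeatedPart π = 2 * x.1 := by
  refine le_antisymm (largestRepeatedPart_le_iff.mpr fun k hk ↦ ?_) ?_
  · by_contra! large
    have := count_toMultiset_le_one (x := x) (k := k) fun i ↦ by lia
    rw [hx] at this
    lia
  · rcases Nat.eq_zero_or_eq_succ_pred x.1 with h | h
    · simp [h]
    · refine le_largestRepeatedPart ?_
      have := count_toMultiset_two_mul_add_two x ⟨x.1 - 1, by lia⟩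
      rw [hx, show 2 * (x.1 - 1) + 2 = 2 * x.1 by lia] at this
      lia

theorem isAdmissible {x : PartitionCode} (hx : x.toMultiset = π.parts) : IsAdmissible π := by
  rw [IsAdmissible, largestRepeatedPart_eq hx, ← hx]
  have le_of_mem {k : ℕ} (hk : k ∈ x.2.2.1) : 2 * x.1 + 2 ≤ k := x.2.2.2.1 k hk
  refine ⟨fun k odd ↦ count_toMultiset_le_one fun i ↦ by grind, fun k odd hk ↦ ?_,
    fun k even pos hk ↦ ?_, fun k ⟨hk, hk'⟩ ↦ ?_⟩
  · rw [count_toMultiset_of_forall_ne fun i ↦ by grind,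
      if_neg (notMem_of_mem_sparseFinsets x.2.2.2 hk)]
  · obtain ⟨i, rfl⟩ : ∃ i, k = 2 * i + 2 := ⟨k / 2 - 1, by grind⟩
    exact (count_toMultiset_two_mul_add_two x ⟨i, by lia⟩).symm ▸ Nat.le_add_left 2 _
  · rcases mem_toMultiset.mp hk with ⟨i, hi⟩ | mem <;>
      rcases mem_toMultiset.mp hk' with ⟨i', hi'⟩ | mem'
    · lia
    · have := le_of_mem mem'
      lia
    · have := le_of_mem mem
      lia
    · exact x.2.2.2.2 k mem mem'

theorem eq_of_toMultiset_eq_parts {x y : PartitionCode} (hx : x.toMultiset = π.parts)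
    (hy : y.toMultiset = π.parts) : x = y := by
  have fst_eq : x.1 = y.1 := by
    have := (largestRepeatedPart_eq hx).symm.trans (largestRepeatedPart_eq hy)
    lia
  obtain ⟨j, f, s⟩ := x
  obtain ⟨_, g, t⟩ := y
  obtain rfl : j = _ := fst_eq
  have count_eq (k : ℕ) := congrArg (Multiset.count k) (hx.trans hy.symm)
  have multiplicities_eq : f = g := by
    funext i
    have := count_eq (2 * i + 2)
    rwa [count_toMultiset_two_mul_add_two ⟨j, f, s⟩ i, count_toMultiset_two_mul_add_two ⟨j, g, t⟩ i,
      Nat.add_right_cancel_iff] at this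
  have large_eq : s = t := by
    ext k
    by_cases hk : 2 * j < k
    · have := count_eq k
      rw [count_toMultiset_of_forall_ne fun i ↦ by grind,
        count_toMultiset_of_forall_ne fun i ↦ by grind] at this
      grind
    · exact iff_of_false (notMem_of_mem_sparseFinsets s.2 (by lia))
        (notMem_of_mem_sparseFinsets t.2 (by lia))
  rw [multiplicities_eq, large_eq]

theorem exists_toMultiset_eq_parts (hπ : IsAdmissible π) :
    ∃ x : PartitionCode, x.toMultiset = π.parts := by
  obtain ⟨j, hj⟩ := hπ.even_largestRepeatedPart.two_dvd
  have sparse := hj ▸ hπ.filter_mem_sparseFinsets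
  set x : PartitionCode := ⟨j, fun i ↦ π.parts.count (2 * (i : ℕ) + 2) - 2, _, sparse⟩
  refine ⟨x, Multiset.ext.mpr fun k ↦ ?_⟩
  by_cases hk : ∃ i : Fin j, 2 * (i : ℕ) + 2 = k
  · obtain ⟨i, rfl⟩ := hk
    exact (count_toMultiset_two_mul_add_two x i).trans <|
      Nat.sub_add_cancel (hπ.two_le_count (by lia))
  push Not at hk
  rw [count_toMultiset_of_forall_ne (x := x) hk]
  change (if k ∈ π.parts.toFinset.filter (2 * j < ·) then 1 else 0) = _
  rw [← hj]
  by_cases large : largestRepeatedPart π < k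
  · have count_le_one : π.parts.count k ≤ 1 := by
      by_contra! repeated
      exact large.not_ge (le_largestRepeatedPart repeated)
    have count_pos_iff : 0 < π.parts.count k ↔ k ∈ π.parts := Multiset.count_pos
    grind
  · have count_zero : π.parts.count k = 0 := by
      rcases Nat.even_or_odd k with even | odd
      · obtain rfl : k = 0 := by
          by_contra ne_zero
          exact hk ⟨k / 2 - 1, by lia⟩ (by grind)
        exact Multiset.count_eq_zero_of_notMem fun mem ↦ (π.parts_pos mem).false
      · exact hπ.2.1 k odd (by lia)
    grind

end Partition

/-- The partition of `n` encoded by a code with sum of parts `n`. -/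
def toPartition {n : ℕ} (x : {c : PartitionCode // c.toMultiset.sum = n}) : n.Partition where
  parts := x.1.toMultiset
  parts_pos {k} hk := by
    rcases mem_toMultiset.mp hk with ⟨i, rfl⟩ | mem
    · lia
    · have := x.1.2.2.2.1 k mem
      lia
  parts_sum := x.2

theorem toPartition_injective (n : ℕ) : Function.Injective (toPartition (n := n)) :=
  fun _ y h ↦ Subtype.ext <|
    eq_of_toMultiset_eq_parts (π := toPartition y) (congrArg Nat.Partition.parts h) rfl

theorem range_toPartition (n : ℕ) : Set.range (toPartition (n := n)) = {π | IsAdmissible π} := by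
  ext π
  refine ⟨fun ⟨x, hx⟩ ↦ isAdmissible (x := x) (congrArg Nat.Partition.parts hx), fun hπ ↦ ?_⟩
  obtain ⟨x, hx⟩ := exists_toMultiset_eq_parts hπ
  exact ⟨⟨x, hx ▸ π.parts_sum⟩, Nat.Partition.ext hx⟩

instance finite_sum_toMultiset_eq (n : ℕ) : Finite {c : PartitionCode // c.toMultiset.sum = n} :=
  .of_injective _ (toPartition_injective n)

theorem natCard_sum_toMultiset_eq (n : ℕ) :
    Nat.card {c : PartitionCode // c.toMultiset.sum = n} = T n := by
  rw [← Nat.card_range_of_injective (toPartition_injective n), range_toPartition]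
  rfl

theorem pow_sum_toMultiset {M : Type*} [CommMonoid M] (q : M) (x : PartitionCode) :
    q ^ x.toMultiset.sum =
      (∏ i : Fin x.1, q ^ ((2 * (i : ℕ) + 2) * (x.2.1 i + 2))) * ∏ k ∈ x.2.2.1, q ^ k := by
  simp only [toMultiset, Multiset.sum_add, Multiset.sum_sum, Multiset.sum_replicate, sum_val, id,
    pow_add, ← prod_pow_eq_pow_sum, smul_eq_mul, mul_comm (2 * _ + 2)]

section NormedField

variable {𝕜 : Type*} [NormedField 𝕜] {q : 𝕜}

theorem hasSum_pow_mul_add_two (hq : ‖q‖ < 1) (i : ℕ) :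
    HasSum (fun k ↦ q ^ ((2 * i + 2) * (k + 2))) (q ^ (4 * i + 4) / (1 - q ^ (2 * i + 2))) := by
  have exponent (k : ℕ) : (2 * i + 2) * (k + 2) = 4 * i + 4 + (2 * i + 2) * k := by ring
  have norm_lt : ‖q ^ (2 * i + 2)‖ < 1 := norm_pow_lt_one hq (Nat.succ_ne_zero _)
  simpa only [exponent, pow_add, pow_mul, div_eq_mul_inv] using
    (hasSum_geometric_of_norm_lt_one norm_lt).mul_left (q ^ (4 * i + 4))

theorem summable_norm_pow_mul_add_two (hq : ‖q‖ < 1) (i : ℕ) :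
    Summable fun k ↦ ‖q ^ ((2 * i + 2) * (k + 2))‖ := by
  simpa only [norm_pow] using (hasSum_pow_mul_add_two (q := ‖q‖) (by rwa [norm_norm]) i).summable

theorem hasSum_pow_sum_toMultiset_mk [CompleteSpace 𝕜] (hq : ‖q‖ < 1) (j : ℕ) :
    HasSum (fun x : (Fin j → ℕ) × sparseFinsets (2 * j + 2) ↦ q ^ (toMultiset ⟨j, x⟩).sum)
      (evenWeight q 4 j * sparseGF q (2 * j + 2)) := by
  have multiplicity_norm (i : Fin j) := summable_norm_pow_mul_add_two hq i
  have sparse_norm := summable_norm_prod_pow_sparseFinsets hq (2 * j + 2)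
  have repeated_norm := summable_norm_pi_prod multiplicity_norm
  have repeated_sum := hasSum_pi_prod multiplicity_norm fun i ↦ hasSum_pow_mul_add_two hq i
  have product_summable := summable_mul_of_summable_norm repeated_norm sparse_norm
  rw [evenWeight, prod_range, sparseGF]
  simpa only [pow_sum_toMultiset] using
    HasSum.mul repeated_sum sparse_norm.of_norm.hasSum product_summable

theorem summable_norm_pow_sum_toMultiset (hq : ‖q‖ < 1) :
    Summable fun x : PartitionCode ↦ ‖q ^ x.toMultiset.sum‖ := by
  -- At the real number `‖q‖`, `hasSum_pow_sum_toMultiset_mk` evaluates the sums of norms.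
  have norm_lt : ‖‖q‖‖ < 1 := by rwa [norm_norm]
  simp only [norm_pow]
  refine (summable_sigma_of_nonneg fun x ↦ pow_nonneg (norm_nonneg q) _).mpr
    ⟨fun j ↦ (hasSum_pow_sum_toMultiset_mk norm_lt j).summable, ?_⟩
  simpa only [(hasSum_pow_sum_toMultiset_mk norm_lt _).tsum_eq] using
    summable_evenWeight_mul_sparseGF norm_lt 4 (2 * · + 2)

theorem hasSum_pow_sum_toMultiset [CompleteSpace 𝕜] (hq : ‖q‖ < 1) :
    HasSum (fun x : PartitionCode ↦ q ^ x.toMultiset.sum)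
      (∑' j, evenWeight q 4 j * sparseGF q (2 * j + 2)) :=
  .sigma_of_hasSum (summable_evenWeight_mul_sparseGF hq 4 (2 * · + 2)).hasSum
    (hasSum_pow_sum_toMultiset_mk hq) (summable_norm_pow_sum_toMultiset hq).of_norm

end NormedField

end PartitionCode

theorem hasSum_natCast_T_mul_pow {q : ℂ} (hq : ‖q‖ < 1) :
    HasSum (fun n ↦ (T n : ℂ) * q ^ n) (∑' j, evenWeight q 4 j * sparseGF q (2 * j + 2)) := by
  simpa only [PartitionCode.natCard_sum_toMultiset_eq] using
    hasSum_natCard_fiber_mul (w := fun x : PartitionCode ↦ x.toMultiset.sum) (f := fun n ↦ q ^ n)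
      (PartitionCode.hasSum_pow_sum_toMultiset hq)

/-- The generating function of `T(n)` equals Slater's series. -/
theorem T_genfun (q : ℂ) (hq : ‖q‖ < 1) :
    ∑' n : ℕ, (T n : ℂ) * q ^ n =
      ∑' n : ℕ, q ^ (2 * n * (n + 1)) * qPoch q (q ^ 2) n * qPochInf (-(q ^ (2 * n + 2))) q /
        qPoch (q ^ 2) (q ^ 2) n := by
  rw [(hasSum_natCast_T_mul_pow hq).tsum_eq, tsum_evenWeight_mul_sparseGF hq]
  refine tsum_congr fun n ↦ ?_
  rw [qPochInf_neg_pow_eq_distinctGF hq, evenWeight_add_two q 2 n]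
  ring
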